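/- Let p be an odd prime, let d, e, f be positive integers with 1 ≤ f < d < e, and let G = M₂(p,d,e,f) with canonical generators a, b. For integers r, s, t, u, the assignment a ↦ bʳaˢ, b ↦ bᵗaᵘ extends to an automorphism of G if and only if r ≡ 0 (mod p^{e−f}), s ≢ 0 (mod p), and t ≡ 1 (mod p^{d−f}). -/

import Mathlib

/-- Relators for the group `M₁(p,d,e,f) = ⟨a, b ∣ a^(p^e) = b^(p^d) = 1, b⁻¹ab = a^(1+p^f)⟩`,
where `a` is generator `0` and `b` is generator `1`. -/
def M1rels (p d e f : ℕ) : Set (FreeGroup (Fin 2)) :=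
  {FreeGroup.of 0 ^ p ^ e, FreeGroup.of 1 ^ p ^ d,
    (FreeGroup.of 1)⁻¹ * FreeGroup.of 0 * FreeGroup.of 1 * (FreeGroup.of 0 ^ (1 + p ^ f))⁻¹}

/-- The metacyclic group `M₁(p,d,e,f) = ⟨a, b ∣ a^(p^e) = b^(p^d) = 1, b⁻¹ab = a^(1+p^f)⟩`. -/
abbrev M1 (p d e f : ℕ) : Type := PresentedGroup (M1rels p d e f)

/-- The canonical generator `a` of `M₁(p,d,e,f)`. -/
def M1a (p d e f : ℕ) : M1 p d e f := PresentedGroup.of 0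

/-- The canonical generator `b` of `M₁(p,d,e,f)`. -/
def M1b (p d e f : ℕ) : M1 p d e f := PresentedGroup.of 1

/-- Relators for the group `M₂(p,d,e,f) = ⟨a, b ∣ a^(p^d) = b^(p^e) = 1, b⁻¹ab = a^(1+p^f)⟩`,
where `a` is generator `0` and `b` is generator `1`. -/
def M2rels (p d e f : ℕ) : Set (FreeGroup (Fin 2)) :=
  {FreeGroup.of 0 ^ p ^ d, FreeGroup.of 1 ^ p ^ e,
    (FreeGroup.of 1)⁻¹ * FreeGroup.of 0 * FreeGroup.of 1 * (FreeGroup.of 0 ^ (1 + p ^ f))⁻¹}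

/-- The metacyclic group `M₂(p,d,e,f) = ⟨a, b ∣ a^(p^d) = b^(p^e) = 1, b⁻¹ab = a^(1+p^f)⟩`. -/
abbrev M2 (p d e f : ℕ) : Type := PresentedGroup (M2rels p d e f)

/-- The canonical generator `a` of `M₂(p,d,e,f)`. -/
def M2a (p d e f : ℕ) : M2 p d e f := PresentedGroup.of 0

/-- The canonical generator `b` of `M₂(p,d,e,f)`. -/
def M2b (p d e f : ℕ) : M2 p d e f := PresentedGroup.of 1

/-- Relators for the group
`M₃(p,d,e,h,f) = ⟨a, b ∣ a^(p^h) = 1, b^(p^(d+e-h)) = a^(p^d), b⁻¹ab = a^(1+p^f)⟩`,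
where `a` is generator `0` and `b` is generator `1`. -/
def M3rels (p d e h f : ℕ) : Set (FreeGroup (Fin 2)) :=
  {FreeGroup.of 0 ^ p ^ h, FreeGroup.of 1 ^ p ^ (d + e - h) * (FreeGroup.of 0 ^ p ^ d)⁻¹,
    (FreeGroup.of 1)⁻¹ * FreeGroup.of 0 * FreeGroup.of 1 * (FreeGroup.of 0 ^ (1 + p ^ f))⁻¹}

/-- The non-split metacyclic group
`M₃(p,d,e,h,f) = ⟨a, b ∣ a^(p^h) = 1, b^(p^(d+e-h)) = a^(p^d), b⁻¹ab = a^(1+p^f)⟩`. -/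
abbrev M3 (p d e h f : ℕ) : Type := PresentedGroup (M3rels p d e h f)

/-- The canonical generator `a` of `M₃(p,d,e,h,f)`. -/
def M3a (p d e h f : ℕ) : M3 p d e h f := PresentedGroup.of 0

/-- The canonical generator `b` of `M₃(p,d,e,h,f)`. -/
def M3b (p d e h f : ℕ) : M3 p d e h f := PresentedGroup.of 1

/-- `(α, β)` is an exact `(m,n)`-bicyclic pair of `G`: `α` has order `m`, `β` has order `n`,
`⟨α⟩ ∩ ⟨β⟩ = 1`, and `G = ⟨α⟩⟨β⟩`. -/
def IsExactBicyclicPair {G : Type*} [Group G] (m n : ℕ) (α β : G) : Prop :=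
  orderOf α = m ∧ orderOf β = n ∧
    Subgroup.zpowers α ⊓ Subgroup.zpowers β = ⊥ ∧
    ∀ g : G, ∃ i j : ℤ, g = α ^ i * β ^ j

section ZModPow

variable {G : Type*} [Group G] {n : ℕ} {a b : G}

/-- The power `a ^ z` with exponent `z : ZMod n`, for an element with `a ^ n = 1`. -/
def zmodPow (ha : a ^ n = 1) (z : ZMod n) : G :=
  (ZMod.lift n ⟨zmultiplesHom (Additive G) (Additive.ofMul a), by
    simpa [← ofMul_pow] using congrArg Additive.ofMul ha⟩ z).toMul

theorem zmodPow_intCast (ha : a ^ n = 1) (m : ℤ) : zmodPow ha (m : ZMod n) = a ^ m := by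
  simp [zmodPow]

theorem zmodPow_natCast (ha : a ^ n = 1) (m : ℕ) : zmodPow ha (m : ZMod n) = a ^ m := by
  simpa using zmodPow_intCast ha m

theorem zmodPow_zero (ha : a ^ n = 1) : zmodPow ha 0 = 1 := by
  simp [zmodPow]

theorem zmodPow_one (ha : a ^ n = 1) : zmodPow ha 1 = a := by
  simpa using zmodPow_intCast ha 1

theorem zmodPow_add (ha : a ^ n = 1) (x y : ZMod n) :
    zmodPow ha (x + y) = zmodPow ha x * zmodPow ha y := by
  simp [zmodPow]

theorem zmodPow_neg (ha : a ^ n = 1) (x : ZMod n) :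
    zmodPow ha (-x) = (zmodPow ha x)⁻¹ := by
  simp [zmodPow]

theorem zmodPow_intCast_mul (ha : a ^ n = 1) (m : ℤ) (z : ZMod n) :
    zmodPow ha (m * z) = zmodPow ha z ^ m := by
  obtain ⟨i, rfl⟩ := ZMod.intCast_surjective z
  rw [← Int.cast_mul, zmodPow_intCast, zmodPow_intCast, mul_comm, zpow_mul]

theorem zmodPow_natCast_mul (ha : a ^ n = 1) (m : ℕ) (z : ZMod n) :
    zmodPow ha (m * z) = zmodPow ha z ^ m := by
  simpa using zmodPow_intCast_mul ha m z

theorem zmodPow_mul_zpow (ha : a ^ n = 1) {k : (ZMod n)ˣ}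
    (hk : b⁻¹ * a * b = zmodPow ha k) (m : ℤ) (z : ZMod n) :
    zmodPow ha z * b ^ m = b ^ m * zmodPow ha ((k ^ m : (ZMod n)ˣ) * z) := by
  have step (z : ZMod n) : zmodPow ha z * b = b * zmodPow ha (k * z) := by
    obtain ⟨i, rfl⟩ := ZMod.intCast_surjective z
    rw [mul_comm (k : ZMod n), zmodPow_intCast_mul, ← hk, zmodPow_intCast]
    have := conj_zpow (i := i) (a := b⁻¹) (b := a)
    rw [inv_inv] at this
    rw [this]; group
  induction m generalizing z with
  | zero => simp
  | succ m ih =>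
    rw [zpow_add_one, ← mul_assoc, ih, mul_assoc, step, zpow_add_one,
      mul_comm _ k, Units.val_mul, mul_assoc, mul_assoc (Units.val _)]
  | pred m ih =>
    have step' (z : ZMod n) :
        zmodPow ha z * b⁻¹ = b⁻¹ * zmodPow ha ((k⁻¹ : (ZMod n)ˣ) * z) := by
      rw [mul_inv_eq_iff_eq_mul, mul_assoc, step]
      simp
    rw [zpow_sub_one, ← mul_assoc, ih, mul_assoc, step', zpow_sub_one,
      mul_comm _ k⁻¹, Units.val_mul, mul_assoc, mul_assoc (Units.val _)]

theorem zpow_mul_zmodPow_mul (ha : a ^ n = 1) {k : (ZMod n)ˣ}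
    (hk : b⁻¹ * a * b = zmodPow ha k) (m m' : ℤ) (z z' : ZMod n) :
    b ^ m * zmodPow ha z * (b ^ m' * zmodPow ha z') =
      b ^ (m + m') * zmodPow ha ((k ^ m' : (ZMod n)ˣ) * z + z') := by
  rw [zmodPow_add, zpow_add, mul_assoc, ← mul_assoc (zmodPow _ z), zmodPow_mul_zpow ha hk]
  simp only [mul_assoc]

theorem zpow_mul_zmodPow_pow (ha : a ^ n = 1) {k : (ZMod n)ˣ}
    (hk : b⁻¹ * a * b = zmodPow ha k) (t : ℤ) (z : ZMod n) (m : ℕ) :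
    (b ^ t * zmodPow ha z) ^ m =
      b ^ (t * m) * zmodPow ha ((∑ i ∈ Finset.range m, ((k ^ t : (ZMod n)ˣ) : ZMod n) ^ i) * z) := by
  induction m with
  | zero => simp [zmodPow_zero]
  | succ m ih =>
    rw [pow_succ, ih, zpow_mul_zmodPow_mul ha hk, geom_sum_succ, add_mul, one_mul, mul_assoc]
    push_cast
    rw [mul_add, mul_one]

theorem zpow_mul_zmodPow_pow_of_central (ha : a ^ n = 1) {k : (ZMod n)ˣ}
    (hk : b⁻¹ * a * b = zmodPow ha k) {r : ℤ} (hr : k ^ r = 1) (z : ZMod n) (m : ℕ) :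
    (b ^ r * zmodPow ha z) ^ m = b ^ (r * m) * zmodPow ha (m * z) := by
  rw [zpow_mul_zmodPow_pow ha hk]
  simp [hr]

end ZModPow

theorem geom_sum_range_mul {R : Type*} [CommSemiring R] (c : R) (m n : ℕ) :
    ∑ i ∈ Finset.range (m * n), c ^ i =
      (∑ i ∈ Finset.range m, c ^ i) * ∑ j ∈ Finset.range n, (c ^ m) ^ j := by
  induction n with
  | zero => simp
  | succ n ih =>
    rw [mul_add_one, Finset.sum_range_add, ih, Finset.sum_range_succ _ n, mul_add]
    simp only [pow_add, pow_mul, ← Finset.mul_sum]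
    rw [mul_comm ((c ^ m) ^ n)]

theorem prime_pow_dvd_geom_sum {p : ℕ} {c : ℤ} (hc : (p : ℤ) ∣ c - 1) (e : ℕ) :
    (p : ℤ) ^ e ∣ ∑ i ∈ Finset.range (p ^ e), c ^ i := by
  have hc' : (c : ZMod p) = 1 := by
    rwa [← ZMod.intCast_zmod_eq_zero_iff_dvd, Int.cast_sub, Int.cast_one, sub_eq_zero] at hc
  induction e with
  | zero => simp
  | succ e ih =>
    rw [pow_succ p, geom_sum_range_mul, pow_succ]
    refine mul_dvd_mul ih ?_
    rw [← ZMod.intCast_zmod_eq_zero_iff_dvd]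
    simp [hc']

/-- The unit `1 + p ^ f` of `ZMod (p ^ d)`. -/
noncomputable def onePlusUnit (p d f : ℕ) (hf : 0 < f) : (ZMod (p ^ d))ˣ :=
  ZMod.unitOfCoprime (1 + p ^ f) <| by
    refine Nat.Coprime.pow_right d ?_
    obtain ⟨g, rfl⟩ := Nat.exists_eq_succ_of_ne_zero hf.ne'
    simp [pow_succ]

theorem orderOf_onePlusUnit {p d f : ℕ} (hp : p.Prime) (hodd : Odd p) (hf : 0 < f) (hfd : f < d) :
    orderOf (onePlusUnit p d f hf) = p ^ (d - f) := by
  have h3 : 3 ≤ p := by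
    have := hp.two_le
    obtain ⟨q, rfl⟩ := hodd
    omega
  have := ZMod.orderOf_one_add_mul_prime_pow hp f hf.ne' (by nlinarith) 1
    (by intro h; exact hp.one_lt.ne' (by simpa using Int.natAbs_dvd_natAbs.2 h)) (d - f)
  rw [Nat.sub_add_cancel hfd.le] at this
  rw [← this, ← orderOf_units]
  simp [onePlusUnit]

theorem onePlusUnit_zpow_eq_one_iff {p d f : ℕ} (hp : p.Prime) (hodd : Odd p) (hf : 0 < f)
    (hfd : f < d) (m : ℤ) :
    onePlusUnit p d f hf ^ m = 1 ↔ (p : ℤ) ^ (d - f) ∣ m := by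
  rw [← orderOf_dvd_iff_zpow_eq_one, orderOf_onePlusUnit hp hodd hf hfd, Nat.cast_pow]

theorem val_onePlusUnit {p d f : ℕ} (hf : 0 < f) :
    (onePlusUnit p d f hf : ZMod (p ^ d)) = 1 + (p : ZMod (p ^ d)) ^ f := by
  simp [onePlusUnit]

namespace M2

variable {p d e f : ℕ}

theorem a_pow : M2a p d e f ^ p ^ d = 1 :=
  PresentedGroup.one_of_mem (rels := M2rels p d e f) (x := FreeGroup.of 0 ^ p ^ d)
    (by simp [M2rels])

theorem b_pow : M2b p d e f ^ p ^ e = 1 :=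
  PresentedGroup.one_of_mem (rels := M2rels p d e f) (x := FreeGroup.of 1 ^ p ^ e)
    (by simp [M2rels])

theorem conj : (M2b p d e f)⁻¹ * M2a p d e f * M2b p d e f = M2a p d e f ^ (1 + p ^ f) :=
  PresentedGroup.mk_eq_mk_of_mul_inv_mem (rels := M2rels p d e f)
    (x := (FreeGroup.of 1)⁻¹ * FreeGroup.of 0 * FreeGroup.of 1) (y := FreeGroup.of 0 ^ (1 + p ^ f))
    (by simp [M2rels])

theorem conj_eq_zmodPow (hf : 0 < f) :
    (M2b p d e f)⁻¹ * M2a p d e f * M2b p d e f =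
      zmodPow (a_pow (e := e) (f := f)) (onePlusUnit p d f hf) := by
  rw [conj, val_onePlusUnit, ← zmodPow_natCast a_pow]
  simp

/-- There is a homomorphism out of `M₂(p,d,e,f)` sending the canonical generators to any pair of
elements that satisfies the defining relations. -/
theorem exists_hom {G : Type*} [Group G] {x y : G} (hx : x ^ p ^ d = 1) (hy : y ^ p ^ e = 1)
    (hxy : y⁻¹ * x * y = x ^ (1 + p ^ f)) :
    ∃ φ : M2 p d e f →* G, φ (M2a p d e f) = x ∧ φ (M2b p d e f) = y := by
  have h : ∀ r ∈ M2rels p d e f, FreeGroup.lift ![x, y] r = 1 := by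
    rintro r (rfl | rfl | rfl) <;> simp [hx, hy, hxy]
  exact ⟨PresentedGroup.toGroup h, PresentedGroup.toGroup.of h, PresentedGroup.toGroup.of h⟩

theorem subgroup_eq_top {H : Subgroup (M2 p d e f)} (ha : M2a p d e f ∈ H)
    (hb : M2b p d e f ∈ H) : H = ⊤ :=
  (Subgroup.eq_top_iff' H).2 <| PresentedGroup.generated_by _ H <| by
    rw [Fin.forall_fin_two]
    exact ⟨ha, hb⟩

theorem exists_eq_zpow_mul_zmodPow (hf : 0 < f) (g : M2 p d e f) :
    ∃ (m : ℤ) (z : ZMod (p ^ d)), g = M2b p d e f ^ m * zmodPow a_pow z := by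
  let H : Subgroup (M2 p d e f) :=
    { carrier := {g | ∃ (m : ℤ) (z : ZMod (p ^ d)), g = M2b p d e f ^ m * zmodPow a_pow z}
      one_mem' := ⟨0, 0, by simp [zmodPow_zero]⟩
      mul_mem' := by
        rintro _ _ ⟨m, z, rfl⟩ ⟨m', z', rfl⟩
        exact ⟨_, _, zpow_mul_zmodPow_mul a_pow (conj_eq_zmodPow hf) m m' z z'⟩
      inv_mem' := by
        rintro _ ⟨m, z, rfl⟩
        exact ⟨-m, _, by
          rw [mul_inv_rev, ← zmodPow_neg, ← zpow_neg,
            zmodPow_mul_zpow a_pow (conj_eq_zmodPow hf)]⟩ }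
  have hH : H = ⊤ := subgroup_eq_top ⟨0, 1, by simp [zmodPow_one]⟩
    ⟨1, 0, by simp [zmodPow_zero]⟩
  exact (Subgroup.eq_top_iff' H).1 hH g

theorem finite (hp : p ≠ 0) (hf : 0 < f) : Finite (M2 p d e f) := by
  have : NeZero p := ⟨hp⟩
  refine Finite.of_surjective
    (fun x : ZMod (p ^ e) × ZMod (p ^ d) ↦ zmodPow (b_pow (d := d) (f := f)) x.1 *
      zmodPow (a_pow (e := e) (f := f)) x.2) fun g ↦ ?_
  obtain ⟨m, z, rfl⟩ := exists_eq_zpow_mul_zmodPow hf g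
  exact ⟨(m, z), by simp [zmodPow_intCast]⟩

theorem b_zpow_eq_one_iff (m : ℤ) : M2b p d e f ^ m = 1 ↔ (p : ℤ) ^ e ∣ m := by
  constructor
  · intro h
    obtain ⟨φ, -, hφ⟩ := exists_hom (p := p) (d := d) (e := e) (f := f)
      (x := (1 : Multiplicative (ZMod (p ^ e)))) (y := Multiplicative.ofAdd 1) (by simp)
      (by rw [← ofAdd_nsmul]; simp) (by simp)
    have := congrArg φ h
    rw [map_zpow, hφ, φ.map_one, ← ofAdd_zsmul] at this
    have := congrArg Multiplicative.toAdd this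
    rw [← Nat.cast_pow, ← ZMod.intCast_zmod_eq_zero_iff_dvd]
    simpa using this
  · rintro ⟨c, rfl⟩
    rw [zpow_mul, ← Nat.cast_pow, zpow_natCast, b_pow, one_zpow]

theorem zmodPow_a_eq_one (hp : p.Prime) (hodd : Odd p) (hf : 0 < f) (hfd : f < d) (hde : d < e)
    {z : ZMod (p ^ d)} (hz : zmodPow (a_pow (e := e) (f := f)) z = 1) : z = 0 := by
  set k := onePlusUnit p d f hf with hk
  have hadd (m : ℕ) (x : ZMod (p ^ d)) : (Equiv.addRight (1 : ZMod (p ^ d)) ^ m) x = x + m := by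
    simp
  obtain ⟨φ, hφ, -⟩ := exists_hom (p := p) (d := d) (e := e) (f := f)
      (x := Equiv.addRight (1 : ZMod (p ^ d)))
      (y := MulAction.toPermHom (ZMod (p ^ d))ˣ (ZMod (p ^ d)) k⁻¹)
      (by ext1 x; rw [hadd]; simp)
      (by
        rw [← map_pow, inv_pow, ← zpow_natCast,
          (onePlusUnit_zpow_eq_one_iff hp hodd hf hfd _).2, inv_one, map_one]
        rw [Nat.cast_pow]
        exact pow_dvd_pow _ (by omega))
      (by
        ext1 x
        rw [hadd, ← map_inv]
        simp [Units.smul_def, ← mul_assoc, ← val_onePlusUnit hf, hk])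
  have : NeZero p := ⟨hp.ne_zero⟩
  obtain ⟨i, rfl⟩ := ZMod.natCast_zmod_surjective (n := p ^ d) z
  rw [zmodPow_natCast] at hz
  have := congrArg φ hz
  rw [map_pow, hφ, map_one] at this
  simpa [hadd] using congrArg (· 0) this

theorem normal_form_eq_iff (hp : p.Prime) (hodd : Odd p) (hf : 0 < f) (hfd : f < d) (hde : d < e)
    {m m' : ℤ} {z z' : ZMod (p ^ d)} :
    M2b p d e f ^ m * zmodPow a_pow z = M2b p d e f ^ m' * zmodPow a_pow z' ↔
      (p : ℤ) ^ e ∣ m - m' ∧ z = z' := by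
  constructor
  · intro h
    obtain ⟨φ, ha, hb⟩ := exists_hom (p := p) (d := d) (e := e) (f := f) (G := M2 p d e f)
      (x := 1) (y := M2b p d e f) (by simp) b_pow (by simp)
    have hA (z : ZMod (p ^ d)) : φ (zmodPow a_pow z) = 1 := by
      obtain ⟨i, rfl⟩ := ZMod.intCast_surjective z
      rw [zmodPow_intCast, map_zpow, ha, one_zpow]
    have h1 : M2b p d e f ^ m = M2b p d e f ^ m' := by simpa [hA, hb] using congrArg φ h
    refine ⟨(b_zpow_eq_one_iff (d := d) (f := f) _).1 (by rw [zpow_sub, h1, mul_inv_cancel]), ?_⟩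
    rw [h1, mul_right_inj] at h
    refine sub_eq_zero.1 (zmodPow_a_eq_one hp hodd hf hfd hde ?_)
    rw [sub_eq_add_neg, zmodPow_add, zmodPow_neg, h, mul_inv_cancel]
  · rintro ⟨h, rfl⟩
    rw [mul_left_inj, ← mul_inv_eq_one, ← zpow_sub, b_zpow_eq_one_iff]
    exact h

theorem isUnit_intCast {s : ℤ} (hp : p.Prime) (hs : ¬ (p : ℤ) ∣ s) :
    IsUnit (s : ZMod (p ^ d)) := by
  rw [ZMod.coe_int_isUnit_iff_isCoprime, Nat.cast_pow]
  exact ((Nat.prime_iff_prime_int.1 hp).coprime_iff_not_dvd.2 hs).pow_left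

theorem dvd_of_automorphism (hp : p.Prime) (hodd : Odd p) (hf : 0 < f) (hfd : f < d)
    (hde : d < e) {r s t u : ℤ} {φ : MulAut (M2 p d e f)}
    (ha : φ (M2a p d e f) = M2b p d e f ^ r * M2a p d e f ^ s)
    (hb : φ (M2b p d e f) = M2b p d e f ^ t * M2a p d e f ^ u) :
    (p : ℤ) ^ (e - f) ∣ r ∧ ¬ (p : ℤ) ∣ s ∧ (p : ℤ) ^ (d - f) ∣ (t - 1) := by
  have hc := conj_eq_zmodPow (p := p) (d := d) (e := e) hf
  have hk := onePlusUnit_zpow_eq_one_iff hp hodd hf hfd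
  have hkv := val_onePlusUnit (p := p) (d := d) hf
  set k := onePlusUnit p d f hf
  rw [← zmodPow_intCast a_pow] at ha hb
  have hrel : φ (M2a p d e f) * φ (M2b p d e f) =
      φ (M2b p d e f) * φ (M2a p d e f) ^ (1 + p ^ f) := by
    rw [← map_pow, ← map_mul, ← map_mul, ← conj]
    group
  rw [ha, hb, zpow_mul_zmodPow_pow a_pow hc, zpow_mul_zmodPow_mul a_pow hc,
    zpow_mul_zmodPow_mul a_pow hc, normal_form_eq_iff hp hodd hf hfd hde] at hrel
  obtain ⟨hr, hst⟩ := hrel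
  have hr' : (p : ℤ) ^ (e - f) ∣ r := by
    have hpf : (p : ℤ) ^ f ≠ 0 := pow_ne_zero _ (by exact_mod_cast hp.ne_zero)
    have hrf : r + t - (t + r * ((1 + p ^ f : ℕ) : ℤ)) = -(r * (p : ℤ) ^ f) := by
      push_cast
      ring
    rwa [hrf, dvd_neg, ← Nat.sub_add_cancel (hfd.trans hde).le, pow_add,
      mul_dvd_mul_iff_right hpf] at hr
  have hkr : k ^ r = 1 := (hk r).2 ((pow_dvd_pow _ (by omega)).trans hr')
  have hs : ¬ (p : ℤ) ∣ s := by
    rintro ⟨s', rfl⟩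
    have h1 : φ (M2a p d e f ^ p ^ (d - 1)) = 1 := by
      rw [map_pow, ha, zpow_mul_zmodPow_pow_of_central a_pow hc hkr,
        (b_zpow_eq_one_iff _).2, one_mul]
      · convert zmodPow_zero (a_pow (e := e) (f := f))
        have : (p : ZMod (p ^ d)) ^ (d - 1) * p = 0 := by
          rw [← pow_succ, Nat.sub_add_cancel (by omega), ← Nat.cast_pow, ZMod.natCast_self]
        push_cast
        rw [← mul_assoc, this, zero_mul]
      · rw [Nat.cast_pow]
        refine (pow_dvd_pow _ ?_).trans ((pow_add (p : ℤ) (e - f) (d - 1)).dvd.trans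
          (mul_dvd_mul_right hr' _))
        omega
    rw [← map_one φ, EmbeddingLike.apply_eq_iff_eq, ← zmodPow_natCast a_pow] at h1
    have h2 := zmodPow_a_eq_one hp hodd hf hfd hde h1
    rw [ZMod.natCast_eq_zero_iff, Nat.pow_dvd_pow_iff_le_right hp.one_lt] at h2
    omega
  refine ⟨hr', hs, (hk _).1 ?_⟩
  rw [zpow_mul, hkr, one_zpow, Units.val_one, one_mul, one_geom_sum, add_comm,
    add_left_cancel_iff, (isUnit_intCast hp hs).mul_left_inj] at hst
  rw [zpow_sub_one, mul_inv_eq_one]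
  ext
  rw [hst, hkv]
  push_cast
  rfl

theorem eq_top_of_images_mem (hp : p.Prime) (hodd : Odd p) (hf : 0 < f) (hfd : f < d)
    (hde : d < e) {r s t u : ℤ} (hr : (p : ℤ) ^ (e - f) ∣ r) (hs : ¬ (p : ℤ) ∣ s)
    (ht : (p : ℤ) ^ (d - f) ∣ (t - 1)) {H : Subgroup (M2 p d e f)}
    (hx : M2b p d e f ^ r * zmodPow a_pow s ∈ H) (hy : M2b p d e f ^ t * zmodPow a_pow u ∈ H) :
    H = ⊤ := by
  have hc := conj_eq_zmodPow (p := p) (d := d) (e := e) hf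
  have hk := onePlusUnit_zpow_eq_one_iff hp hodd hf hfd
  have hkv := val_onePlusUnit (p := p) (d := d) hf
  set k := onePlusUnit p d f hf
  have hkr : k ^ r = 1 := (hk r).2 ((pow_dvd_pow _ (by omega)).trans hr)
  have hkt : k ^ t = k := by
    rw [← mul_inv_eq_one, ← zpow_sub_one]
    exact (hk _).2 ht
  have : NeZero p := ⟨hp.ne_zero⟩
  have hcomm (z : ZMod (p ^ d)) : Commute (M2b p d e f ^ r) (zmodPow a_pow z) := by
    have := zmodPow_mul_zpow a_pow hc r z
    rw [hkr, Units.val_one, one_mul] at this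
    exact this.symm
  have hcomm' (z : ZMod (p ^ d)) : Commute (M2b p d e f ^ (-(r * u))) (zmodPow a_pow z) := by
    rw [← mul_neg, zpow_mul]
    exact (hcomm z).zpow_left _
  obtain ⟨v, hv⟩ := isUnit_intCast (d := d) hp hs
  have hfH (z : ZMod (p ^ d)) : zmodPow a_pow ((p : ZMod (p ^ d)) ^ f * z) ∈ H := by
    obtain ⟨m, hm⟩ := ZMod.natCast_zmod_surjective (n := p ^ d) ((v⁻¹ : (ZMod (p ^ d))ˣ) * z)
    have h := H.pow_mem hx (p ^ f * m)
    rw [zpow_mul_zmodPow_pow_of_central a_pow hc hkr, (b_zpow_eq_one_iff _).2, one_mul] at h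
    · convert h using 2
      push_cast
      rw [hm, ← hv, mul_assoc, mul_right_comm, Units.inv_mul, one_mul]
    · push_cast
      rw [← mul_assoc]
      refine Dvd.dvd.mul_right ?_ _
      refine (pow_dvd_pow _ ?_).trans ((pow_add (p : ℤ) (e - f) f).dvd.trans
          (mul_dvd_mul_right hr _))
      omega
  have hgeom (n : ℕ) : (p : ZMod (p ^ d)) ^ f ∣
      ∑ i ∈ Finset.range n, (k : ZMod (p ^ d)) ^ i - n := by
    have : ∑ i ∈ Finset.range n, (k : ZMod (p ^ d)) ^ i - n =
        ∑ i ∈ Finset.range n, ((k : ZMod (p ^ d)) ^ i - 1) := by simp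
    rw [this]
    refine Finset.dvd_sum fun i _ ↦ ?_
    refine Dvd.dvd.trans ?_ (sub_one_dvd_pow_sub_one _ i)
    simp [hkv]
  obtain ⟨n, hn⟩ := ZMod.natCast_zmod_surjective (n := p ^ d) (s : ZMod (p ^ d))
  obtain ⟨w, hw⟩ := hgeom n
  have hb' : M2b p d e f ^ (t * n - r * u) ∈ H := by
    have h := H.mul_mem (H.pow_mem hy n) (H.inv_mem (H.zpow_mem hx u))
    rw [(hcomm _).mul_zpow, zpow_mul_zmodPow_pow a_pow hc, hkt, ← zpow_mul, mul_inv_rev,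
      ← zmodPow_intCast_mul, ← zmodPow_neg, mul_assoc, ← mul_assoc (zmodPow _ _),
      ← zmodPow_add, ← zpow_neg, ← (hcomm' _).eq, ← mul_assoc, ← zpow_add,
      show (∑ i ∈ Finset.range n, (k : ZMod (p ^ d)) ^ i) * u + -(u * s) = p ^ f * (w * u) by
        linear_combination (u : ZMod (p ^ d)) * hw + u * hn,
      H.mul_mem_cancel_right (hfH _), ← sub_eq_add_neg] at h
    exact h
  have hbH : M2b p d e f ∈ H := by
    have hpr : (p : ℤ) ∣ r := (dvd_pow_self _ (by omega)).trans hr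
    have hpt : (p : ℤ) ∣ t - 1 := (dvd_pow_self _ (by omega)).trans ht
    have hpn : (p : ℤ) ∣ n - s := by
      refine (dvd_pow_self _ (by omega : d ≠ 0)).trans ?_
      rw [← Nat.cast_pow, ← ZMod.intCast_zmod_eq_zero_iff_dvd]
      simp [hn]
    have hD : ¬ (p : ℤ) ∣ t * n - r * u := fun h ↦ hs <| by
      have := (h.add (hpr.mul_right u)).sub ((hpt.mul_right n).add hpn)
      ring_nf at this
      exact this
    obtain ⟨α, β, h⟩ := ((Nat.prime_iff_prime_int.1 hp).coprime_iff_not_dvd.2 hD).pow_left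
      (m := e)
    have h1 := H.zpow_mem hb' β
    rwa [← zpow_mul, mul_comm, eq_sub_iff_add_eq'.2 h, zpow_sub, zpow_one,
      (b_zpow_eq_one_iff _).2 (dvd_mul_left _ α), inv_one, mul_one] at h1
  refine subgroup_eq_top ?_ hbH
  have haH := (H.mul_mem_cancel_left (H.zpow_mem hbH r)).1 hx
  obtain ⟨m, hm⟩ := ZMod.natCast_zmod_surjective (n := p ^ d) ((v⁻¹ : (ZMod (p ^ d))ˣ) :
    ZMod (p ^ d))
  have h := H.pow_mem haH m
  rwa [← zmodPow_natCast_mul, hm, ← hv, Units.inv_mul, zmodPow_one] at h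

theorem exists_automorphism (hp : p.Prime) (hodd : Odd p) (hf : 0 < f) (hfd : f < d)
    (hde : d < e) {r s t u : ℤ} (hr : (p : ℤ) ^ (e - f) ∣ r) (hs : ¬ (p : ℤ) ∣ s)
    (ht : (p : ℤ) ^ (d - f) ∣ (t - 1)) :
    ∃ φ : MulAut (M2 p d e f),
      φ (M2a p d e f) = M2b p d e f ^ r * M2a p d e f ^ s ∧
      φ (M2b p d e f) = M2b p d e f ^ t * M2a p d e f ^ u := by
  have hc := conj_eq_zmodPow (p := p) (d := d) (e := e) hf
  have hk := onePlusUnit_zpow_eq_one_iff hp hodd hf hfd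
  have hkv := val_onePlusUnit (p := p) (d := d) hf
  set k := onePlusUnit p d f hf
  have hkr : k ^ r = 1 := (hk r).2 ((pow_dvd_pow _ (by omega)).trans hr)
  have hkt : k ^ t = k := by
    rw [← mul_inv_eq_one, ← zpow_sub_one]
    exact (hk _).2 ht
  simp only [← zmodPow_intCast a_pow]
  obtain ⟨φ, ha, hb⟩ := exists_hom (p := p) (d := d) (e := e) (f := f) (G := M2 p d e f)
    (x := M2b p d e f ^ r * zmodPow a_pow s) (y := M2b p d e f ^ t * zmodPow a_pow u)
    (by
      rw [zpow_mul_zmodPow_pow_of_central a_pow hc hkr, (b_zpow_eq_one_iff _).2]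
      · simp [zmodPow_zero]
      · push_cast
        refine (pow_dvd_pow _ ?_).trans ((pow_add (p : ℤ) (e - f) d).dvd.trans
          (mul_dvd_mul_right hr _))
        omega)
    (by
      rw [zpow_mul_zmodPow_pow a_pow hc, Nat.cast_pow, (b_zpow_eq_one_iff _).2 (dvd_mul_left _ _), hkt, hkv]
      have h := prime_pow_dvd_geom_sum (p := p) (c := 1 + (p : ℤ) ^ f)
        (by simpa using dvd_pow_self (p : ℤ) hf.ne') e
      replace h := (pow_dvd_pow _ hde.le).trans h
      rw [← Nat.cast_pow, ← ZMod.intCast_zmod_eq_zero_iff_dvd] at h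
      push_cast at h
      rw [h, zero_mul, zmodPow_zero, one_mul])
    (by
      rw [mul_assoc, inv_mul_eq_iff_eq_mul, zpow_mul_zmodPow_pow_of_central a_pow hc hkr,
        zpow_mul_zmodPow_mul a_pow hc, zpow_mul_zmodPow_mul a_pow hc,
        normal_form_eq_iff hp hodd hf hfd hde, zpow_mul, hkr, hkt, hkv]
      constructor
      · push_cast
        have : r + t - (t + r * (1 + (p : ℤ) ^ f)) = -(r * (p : ℤ) ^ f) := by ring
        rw [this, dvd_neg]
        refine (pow_dvd_pow _ ?_).trans ((pow_add (p : ℤ) (e - f) f).dvd.trans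
          (mul_dvd_mul_right hr _))
        omega
      · simp [add_comm])
  have hsurj : Function.Surjective φ := by
    rw [← MonoidHom.range_eq_top]
    exact eq_top_of_images_mem hp hodd hf hfd hde hr hs ht ⟨_, ha⟩ ⟨_, hb⟩
  have := finite (d := d) (e := e) hp.ne_zero hf
  exact ⟨MulEquiv.ofBijective φ hsurj.bijective_of_finite, ha, hb⟩

end M2

/-- For `G = M₂(p,d,e,f)` with `1 ≤ f < d < e`, canonical generators
`a, b`, and integers `r, s, t, u`, the assignment `a ↦ bʳaˢ, b ↦ bᵗaᵘ` extends to an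
automorphism of `G` iff `r ≡ 0 (mod p^(e-f))`, `s ≢ 0 (mod p)` and `t ≡ 1 (mod p^(d-f))`. -/
theorem stmt_13 (p d e f : ℕ) (hp : p.Prime) (hodd : Odd p)
    (hf : 0 < f) (hfd : f < d) (hde : d < e) (r s t u : ℤ) :
    (∃ φ : MulAut (M2 p d e f),
        φ (M2a p d e f) = M2b p d e f ^ r * M2a p d e f ^ s ∧
        φ (M2b p d e f) = M2b p d e f ^ t * M2a p d e f ^ u) ↔
      ((p : ℤ) ^ (e - f) ∣ r ∧ ¬ (p : ℤ) ∣ s ∧ (p : ℤ) ^ (d - f) ∣ (t - 1)) :=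
  ⟨fun ⟨_, ha, hb⟩ ↦ M2.dvd_of_automorphism hp hodd hf hfd hde ha hb,
    fun ⟨hr, hs, ht⟩ ↦ M2.exists_automorphism hp hodd hf hfd hde hr hs ht⟩
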